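/- Let κ be an infinite cardinal with κ^ω = κ and G = ℤ^(κ). Suppose: (i) (p_{T,n} : T ∈ 𝒯, n ∈ ω) is a family of pairwise Rudin–Keisler incomparable selective ultrafilters on ω with l(T) ∈ p_{T,n}; (ii) (h_ξ : ω ≤ ξ < κ) is an enumeration of G^ω with supp h_ξ(n) ⊆ ξ for all n ∈ ω and ω ≤ ξ < κ; (iii) (J_{T,n} : T ∈ 𝒯, n ∈ ω) is a family of pairwise disjoint subsets of κ \ ω, infinitely many of which are nonempty, such that for each (T,n) the classes [h_ξ]_{p_{T,n}} (ξ ∈ J_{T,n}) are pairwise distinct and {[h_ξ]_{p_{T,n}} : ξ ∈ J_{T,n}} ∪ {[χ⃗_ζ]_{p_{T,n}} : ζ < κ} is a ℚ-linearly independent subset of Ult(ℚ, p_{T,n}). Let d ∈ G be nonzero and let r be an injective sequence in G. Then there exists a group homomorphism φ : ℤ^(κ) → 𝕋 such that: φ(d) ≠ 0; for every T ∈ 𝒯, n ∈ ω and ξ ∈ J_{T,n}, the sequence (φ(h_ξ(k)) : k ∈ ω) has p_{T,n}-limit φ(χ_ξ); and the sequence (φ(r(n)) : n ∈ ω) does not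 converge in 𝕋. -/

import Mathlib

open Cardinal Filter Set Pointwise

noncomputable section

/-- A free (nonprincipal) ultrafilter on ω. -/
def IsFreeUltrafilter (p : Ultrafilter ℕ) : Prop := ∀ n : ℕ, p ≠ pure n

/-- A selective ultrafilter on ω. -/
def IsSelective (p : Ultrafilter ℕ) : Prop :=
  IsFreeUltrafilter p ∧
  ∀ A : ℕ → Set ℕ,
    (∀ k, (A k).Nonempty) → (Pairwise fun k l => Disjoint (A k) (A l)) →
    (⋃ k, A k) = Set.univ →
    (∃ k, A k ∈ p) ∨ ∃ B ∈ p, ∀ k, ∃! n, n ∈ B ∩ A k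

/-- Rudin–Keisler order: `U ≤ V` iff `V = f_*(U)` for some `f`. -/
def RKle (U V : Ultrafilter ℕ) : Prop := ∃ f : ℕ → ℕ, Ultrafilter.map f U = V

/-- Rudin–Keisler incomparability. -/
def RKIncomp (U V : Ultrafilter ℕ) : Prop := ¬ RKle U V ∧ ¬ RKle V U

/-- The index set of order type (the initial ordinal of) `κ`. -/
abbrev Idx (κ : Cardinal) : Type _ := ↥(Set.Iio κ.ord)

/-- The free abelian group `ℤ^(κ)` of finitely supported integer functions on `κ`. -/
abbrev GZ (κ : Cardinal) := Idx κ →₀ ℤ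

/-- The ℚ-vector space `ℚ^(κ)` of finitely supported rational functions on `κ`. -/
abbrev GQ (κ : Cardinal) := Idx κ →₀ ℚ

/-- The canonical embedding `ℤ^(κ) → ℚ^(κ)`. -/
def toQ (κ : Cardinal) (f : GZ κ) : GQ κ :=
  Finsupp.mapRange (Int.cast : ℤ → ℚ) Int.cast_zero f

/-- The characteristic function `χ_ξ`. -/
def chi (κ : Cardinal) (ξ : Idx κ) : GZ κ := Finsupp.single ξ 1

/-- The class `[f]_p` of a sequence `f : ω → ℤ^(κ)` in the ultrapower
`Ult(ℚ, p) = (ℚ^(κ))^ω / p`, realized as a germ. -/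
def cls (κ : Cardinal) (p : Ultrafilter ℕ) (f : ℕ → GZ κ) :
    Filter.Germ (↑p : Filter ℕ) (GQ κ) :=
  (↑(fun n => toQ κ (f n)) : Filter.Germ (↑p : Filter ℕ) (GQ κ))

/-- The class `[χ⃗_ξ]_p` of the constant sequence with value `χ_ξ`. -/
def clsChi (κ : Cardinal) (p : Ultrafilter ℕ) (ξ : Idx κ) :
    Filter.Germ (↑p : Filter ℕ) (GQ κ) :=
  cls κ p (fun _ => chi κ ξ)

/-- `cls` as an additive homomorphism. -/
def clsHom (κ : Cardinal) (p : Ultrafilter ℕ) :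
    (ℕ → GZ κ) →+ Filter.Germ (↑p : Filter ℕ) (GQ κ) :=
  AddMonoidHom.mk' (cls κ p) (by
    intro a b
    unfold cls
    have h : (fun n => toQ κ ((a + b) n)) =
        (fun n => toQ κ (a n)) + (fun n => toQ κ (b n)) := by
      funext n
      simp only [Pi.add_apply, toQ]
      exact Finsupp.mapRange_add (fun x y => by push_cast; ring) _ _
    rw [h, ← Filter.Germ.coe_add])

/-- `Ult(ℤ, p)`: the subgroup of `Ult(ℚ, p)` consisting of classes of
integer-valued sequences. -/
def UltZ (κ : Cardinal) (p : Ultrafilter ℕ) :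
    AddSubgroup (Filter.Germ (↑p : Filter ℕ) (GQ κ)) :=
  (clsHom κ p).range

/-- `ℱ` is linearly independent mod `A*`. -/
def LinIndepMod (κ : Cardinal) (A : Set ℕ) (F : Set (ℕ → GZ κ)) : Prop :=
  ∀ p : Ultrafilter ℕ, IsFreeUltrafilter p → A ∈ p →
    (∀ f ∈ F, ∀ g ∈ F, f ≠ g → cls κ p f ≠ cls κ p g) ∧
    LinearIndependent ℚ
      (Sum.elim (fun f : F => cls κ p ↑f) (fun ξ : Idx κ => clsChi κ p ξ))

/-- `ℰ` is maximal (w.r.t. inclusion) among subsets linearly independent mod `A*`. -/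
def MaximalLinIndepMod (κ : Cardinal) (A : Set ℕ) (E : Set (ℕ → GZ κ)) : Prop :=
  LinIndepMod κ A E ∧ ∀ E' : Set (ℕ → GZ κ), LinIndepMod κ A E' → E ⊆ E' → E' = E

/-- A finite tower in ω: a finite decreasing sequence of infinite subsets of ω. -/
def IsTower (T : List (Set ℕ)) : Prop :=
  (∀ A ∈ T, A.Infinite) ∧
  ∀ i : ℕ, ∀ h : i + 1 < T.length, T.get ⟨i + 1, h⟩ ⊆ T.get ⟨i, Nat.lt_of_succ_lt h⟩

/-- `l(T)`: the last term of a finite tower, with `l(∅) = ω`. -/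
def lastOf (T : List (Set ℕ)) : Set ℕ := T.getLastD Set.univ

/-- `x` is a `p`-limit of the sequence `s`. -/
def IsPLim {X : Type*} [TopologicalSpace X] (p : Ultrafilter ℕ) (s : ℕ → X) (x : X) : Prop :=
  ∀ U ∈ nhds x, {n | s n ∈ U} ∈ p

/-- Countable compactness: every countable open cover has a finite subcover. -/
def CountablyCompactSp (X : Type*) [TopologicalSpace X] : Prop :=
  ∀ 𝒰 : Set (Set X), 𝒰.Countable → (∀ u ∈ 𝒰, IsOpen u) → ⋃₀ 𝒰 = Set.univ →
    ∃ ℱ ⊆ 𝒰, ℱ.Finite ∧ ⋃₀ ℱ = Set.univ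

/-!
A homomorphism `ℤ^(κ) → 𝕋` is a point `x` of the compact group `𝕋^κ`. On a countable set `S` of
coordinates closed under the supports occurring in the `h_ξ`, a suitable `x` is found in a
decreasing intersection of compact sets: at a stage `k` belonging to a chosen member of `p_{T,n}`,
the compact set shrinks so that `x(h_ξ(k))` comes close to `x(χ_ξ)` for finitely many `ξ ∈ J_{T,n}`
at once. This is possible for almost all `k`: by independence modulo constants, small perturbations
of `x` shift any given finitely many nontrivial integer combinations of the `x(h_ξ(k))` by `1/2`.
Take a trigonometric polynomial with positive constant term and negative real part outside a small
ball; its average over the sums of these perturbations is its constant term, so one of the sums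
brings the vector of differences `x(h_ξ(k)) - x(χ_ξ)` into the ball. Selectivity and incomparability
make the chosen members disjoint and so sparse that the requirement at each stage can be imposed in
advance on the finitely many compact sets reachable by then.

Uncountably many ultrafilters are available but only countably many matter for `S`. Two of the
remaining ones force the limits `φ(d) ≠ 0` and `0` on the sequence `r`, which therefore diverges.
Finally `x` is extended beyond `S` by recursion, each new value being the required limit.
-/

section Ultrafilters

variable {α β K : Type*}

theorem IsFreeUltrafilter.le_cofinite {p : Ultrafilter ℕ} (hp : IsFreeUltrafilter p) :
    (p : Filter ℕ) ≤ cofinite :=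
  p.le_cofinite_or_eq_pure.resolve_right fun ⟨n, hn⟩ => hp n hn

theorem IsFreeUltrafilter.le_atTop {p : Ultrafilter ℕ} (hp : IsFreeUltrafilter p) :
    (p : Filter ℕ) ≤ atTop :=
  hp.le_cofinite.trans_eq Nat.cofinite_eq_atTop

theorem notMem_of_finite_of_le_cofinite {p : Ultrafilter α} (hp : (p : Filter α) ≤ cofinite)
    {s : Set α} (hs : s.Finite) : s ∉ p :=
  Ultrafilter.compl_mem_iff_notMem.1 (hp hs.compl_mem_cofinite)

theorem exists_eventually_eq_of_eventually_mem_finite {p : Ultrafilter α} {f : α → β} {s : Set β}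
    (hs : s.Finite) (h : ∀ᶠ n in p, f n ∈ s) : ∃ a, ∀ᶠ n in p, f n = a := by
  obtain ⟨a, -, ha⟩ := (p.map f).eq_pure_of_finite_mem hs h
  have hmem : {a} ∈ p.map f := ha ▸ mem_singleton a
  exact ⟨a, hmem⟩

theorem rkle_of_map_eq_map {U V : Ultrafilter ℕ} {f : ℕ → ℕ} {B : Set ℕ} (hB : B ∈ V)
    (hf : InjOn f B) (h : U.map f = V.map f) : RKle U V := by
  refine ⟨Function.invFunOn f B ∘ f, ?_⟩
  rw [← Ultrafilter.map_map, h, Ultrafilter.map_map]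
  have hid : Function.invFunOn f B ∘ f =ᶠ[(V : Filter ℕ)] id :=
    Filter.eventually_of_mem hB hf.leftInvOn_invFunOn
  exact Ultrafilter.coe_injective ((Filter.map_congr hid).trans Filter.map_id)

theorem IsSelective.exists_preimage_mem_or_injOn {p : Ultrafilter ℕ} (hp : IsSelective p)
    (f : ℕ → ℕ) : (∃ a, f ⁻¹' {a} ∈ p) ∨ ∃ B ∈ p, InjOn f B := by
  by_cases hfin : (range f).Finite
  · exact Or.inl (exists_eventually_eq_of_eventually_mem_finite hfin (.of_forall mem_range_self))
  · set e : ℕ → ℕ := Nat.nth (· ∈ range f)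
    have he : Function.Injective e := Nat.nth_injective hfin
    have hrange : range e = range f := Nat.range_nth_of_infinite hfin
    have hfibre : ∀ n, ∃ k, f n = e k := fun n => by
      obtain ⟨k, hk⟩ := hrange.symm ▸ mem_range_self n
      exact ⟨k, hk.symm⟩
    obtain ⟨k, hk⟩ | ⟨B, hB, hsel⟩ := hp.2 (fun k => f ⁻¹' {e k})
      (fun k => hrange.le (mem_range_self k))
      (fun k l hkl => Disjoint.preimage f (disjoint_singleton.2 (he.ne hkl)))
      (iUnion_eq_univ_iff.2 hfibre)
    · exact Or.inl ⟨_, hk⟩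
    · refine Or.inr ⟨B, hB, fun n hn n' hn' hnn' => ?_⟩
      obtain ⟨k, hk⟩ := hfibre n
      exact (hsel k).unique ⟨hn, hk⟩ ⟨hn', hnn'.symm.trans hk⟩

theorem IsSelective.exists_injOn_of_tendsto {p : Ultrafilter ℕ} (hp : IsSelective p) {f : ℕ → ℕ}
    (hf : Tendsto f atTop atTop) : ∃ B ∈ p, InjOn f B := by
  refine (hp.exists_preimage_mem_or_injOn f).resolve_left ?_
  rintro ⟨a, ha⟩
  obtain ⟨n, hna, hn⟩ := p.nonempty_of_mem
    (Filter.inter_mem ha (hp.1.le_atTop (hf.eventually_gt_atTop a)))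
  exact hn.ne' hna

/-- A P-point: countably many members of the ultrafilter have a pseudo-intersection in it.
Freeness is not part of the definition. -/
def IsPPoint (p : Ultrafilter α) : Prop :=
  ∀ X : ℕ → Set α, (∀ i, X i ∈ p) → ∃ Y ∈ p, ∀ i, (Y \ X i).Finite

theorem IsSelective.isPPoint {p : Ultrafilter ℕ} (hp : IsSelective p) : IsPPoint p := by
  intro X hX
  let f : ℕ → ℕ := fun n => sInf {i | n ∈ X i → n ≤ i}
  have hfmem : ∀ n, n ∈ X (f n) → n ≤ f n := fun n =>
    Nat.sInf_mem (s := {i | n ∈ X i → n ≤ i}) ⟨n, fun _ => le_rfl⟩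
  obtain ⟨a, ha⟩ | ⟨B, hB, hinj⟩ := hp.exists_preimage_mem_or_injOn f
  · refine absurd (Filter.mem_of_superset (Filter.inter_mem ha (hX a)) ?_)
      (notMem_of_finite_of_le_cofinite hp.1.le_cofinite (finite_Iic a))
    rintro n ⟨rfl, hn⟩
    exact hfmem n hn
  · refine ⟨B, hB, fun i => Set.Finite.of_injOn (t := Iic i) ?_ (hinj.mono sdiff_subset)
      (finite_Iic i)⟩
    exact fun n hn => Nat.sInf_le fun hni => absurd hni hn.2

theorem IsPPoint.map {p : Ultrafilter α} (hp : IsPPoint p) (f : α → β) : IsPPoint (p.map f) := by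
  intro X hX
  obtain ⟨Y, hY, hYX⟩ := hp (fun i => f ⁻¹' X i) hX
  refine ⟨f '' Y, Filter.image_mem_map hY, fun i => ((hYX i).image f).subset ?_⟩
  rintro _ ⟨⟨n, hn, rfl⟩, hni⟩
  exact ⟨n, ⟨hn, hni⟩, rfl⟩

theorem IsPPoint.exists_mem_forall_notMem [Countable K] {p : Ultrafilter α} (hp : IsPPoint p)
    {u : K → Ultrafilter α} (hu : ∀ k, (u k : Filter α) ≤ cofinite) (hne : ∀ k, u k ≠ p) :
    ∃ X ∈ p, ∀ k, X ∉ u k := by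
  cases isEmpty_or_nonempty K
  · exact ⟨univ, Filter.univ_mem, isEmptyElim⟩
  obtain ⟨e, he⟩ := exists_surjective_nat K
  have hsep : ∀ k, ∃ Z ∈ p, Z ∉ u k := fun k => by
    by_contra! h
    exact hne k (Ultrafilter.eq_of_le fun Z hZ => h Z hZ)
  choose Z hZp hZu using hsep
  obtain ⟨Y, hY, hYZ⟩ := hp (fun i => Z (e i)) fun i => hZp _
  refine ⟨Y, hY, fun k hYk => ?_⟩
  obtain ⟨i, rfl⟩ := he k
  exact notMem_of_finite_of_le_cofinite (hu _) (hYZ i)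
    (Filter.inter_mem hYk (Ultrafilter.compl_mem_iff_notMem.2 (hZu _)))

theorem exists_pairwise_disjoint_mem [Countable K] {u : K → Ultrafilter α}
    (hinj : Function.Injective u) (hu : ∀ k, (u k : Filter α) ≤ cofinite)
    (hpp : ∀ k, IsPPoint (u k)) :
    ∃ X : K → Set α, (∀ k, X k ∈ u k) ∧ Pairwise (Function.onFun Disjoint X) := by
  obtain ⟨e, he⟩ := exists_injective_nat K
  have hsep : ∀ k, ∃ X ∈ u k, ∀ l : {l // l ≠ k}, X ∉ u l := fun k =>
    (hpp k).exists_mem_forall_notMem (fun l : {l // l ≠ k} => hu l) fun l => hinj.ne l.2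
  choose X hXmem hXnot using hsep
  refine ⟨fun k => X k \ ⋃ l ∈ {l | e l < e k}, X l, fun k => ?_, ?_⟩
  · refine Filter.inter_mem (hXmem k) (Ultrafilter.compl_mem_iff_notMem.2 fun h => ?_)
    have hfin : {l | e l < e k}.Finite := (finite_Iio (e k)).preimage he.injOn
    obtain ⟨l, hl, hlk⟩ := (Ultrafilter.finite_biUnion_mem_iff hfin).1 h
    exact hXnot l ⟨k, fun h => (h ▸ hl : e k < e k).false⟩ hlk
  · have hlt : ∀ k l, e k < e l → Disjoint (X k \ ⋃ j ∈ {j | e j < e k}, X j)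
        (X l \ ⋃ j ∈ {j | e j < e l}, X j) := fun k l hkl =>
      Set.disjoint_left.2 fun n hk hl => hl.2 (mem_biUnion (x := k) hkl hk.1)
    intro k l hkl
    exact (he.ne hkl).lt_or_gt.elim (hlt k l) fun h => (hlt l k h).symm

variable [Countable K] {q : K → Ultrafilter ℕ}

theorem exists_mem_forall_eq_of_apply_eq (hsel : ∀ k, IsSelective (q k))
    (hinc : Pairwise fun k l => RKIncomp (q k) (q l)) {f : ℕ → ℕ} (hf : Tendsto f atTop atTop) :
    ∃ D : K → Set ℕ, (∀ k, D k ∈ q k) ∧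
      ∀ k, ∀ n ∈ D k, ∀ l, ∀ n' ∈ D l, f n = f n' → k = l ∧ n = n' := by
  choose B hBmem hBinj using fun k => (hsel k).exists_injOn_of_tendsto hf
  have hinj : Function.Injective fun k => (q k).map f := by
    intro k l hkl
    by_contra hne
    exact (hinc hne).1 (rkle_of_map_eq_map (hBmem l) (hBinj l) hkl)
  have hfree : ∀ k, ((q k).map f : Filter ℕ) ≤ cofinite := fun k =>
    (hf.mono_left (hsel k).1.le_atTop).trans_eq Nat.cofinite_eq_atTop.symm
  obtain ⟨X, hXmem, hXdisj⟩ :=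
    exists_pairwise_disjoint_mem hinj hfree fun k => (hsel k).isPPoint.map f
  refine ⟨fun k => B k ∩ f ⁻¹' X k, fun k => Filter.inter_mem (hBmem k) (hXmem k), ?_⟩
  intro k n hn l n' hn' hff
  obtain rfl : k = l := by
    by_contra hne
    exact Set.disjoint_left.1 (hXdisj hne) hn.2 (hff ▸ hn'.2)
  exact ⟨rfl, hBinj k hn.1 hn'.1 hff⟩

theorem exists_galoisConnection_of_strictMono {m : ℕ → ℕ} (hm : StrictMono m) (hm0 : m 0 = 0) :
    ∃ blk : ℕ → ℕ, GaloisConnection m blk := by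
  refine ⟨fun n => Nat.findGreatest (m · ≤ n) n, fun i n => ⟨fun h => ?_, fun h => ?_⟩⟩
  · exact Nat.le_findGreatest ((hm.le_apply).trans h) h
  · have hspec : m (Nat.findGreatest (m · ≤ n) n) ≤ n :=
      Nat.findGreatest_spec (P := (m · ≤ n)) (Nat.zero_le n) (by simp only [hm0, Nat.zero_le])
    exact (hm.monotone h).trans hspec

end Ultrafilters

section Runs

variable {K S : Type*}

theorem exists_option_eq_some_iff_mem {α ι : Type*} {J : ι → Set α}
    (hJ : Pairwise (Function.onFun Disjoint J)) :
    ∃ own : α → Option ι, ∀ i a, own a = some i ↔ a ∈ J i := by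
  classical
  refine ⟨fun a => if h : ∃ i, a ∈ J i then some h.choose else none, fun i a => ?_⟩
  by_cases h : ∃ i, a ∈ J i
  · simp only [dif_pos h, Option.some_inj]
    exact ⟨fun hi => hi ▸ h.choose_spec, fun hi => by
      by_contra hne
      exact Set.disjoint_left.1 (hJ hne) h.choose_spec hi⟩
  · simpa only [dif_neg h, reduceCtorEq, false_iff] using fun hi => h ⟨i, hi⟩

theorem exists_finite_reachable {e : K → ℕ} (he : Function.Injective e)
    (step : K → S → ℕ → S) (a₀ : S) :
    ∃ F : ℕ → Set S, (∀ n, (F n).Finite) ∧ a₀ ∈ F 0 ∧ Monotone F ∧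
      ∀ k n, e k ≤ n → ∀ a ∈ F n, step k a n ∈ F (n + 1) := by
  let F : ℕ → Set S := fun n =>
    Nat.rec {a₀} (fun n X => X ∪ ⋃ k ∈ e ⁻¹' Iic n, (step k · n) '' X) n
  refine ⟨F, fun n => ?_, rfl, monotone_nat_of_le_succ fun n => subset_union_left,
    fun k n hk a ha => Or.inr (mem_biUnion (x := k) hk (mem_image_of_mem _ ha))⟩
  induction n with
  | zero => exact finite_singleton a₀
  | succ n ih =>
    exact ih.union (((finite_Iic n).preimage he.injOn).biUnion fun k _ => ih.image _)

variable [Countable K] {q : K → Ultrafilter ℕ}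

theorem exists_separated_blocks (hsel : ∀ k, IsSelective (q k))
    (hinc : Pairwise fun k l => RKIncomp (q k) (q l)) {m : ℕ → ℕ} {blk : ℕ → ℕ}
    (hgc : GaloisConnection m blk) :
    ∃ D : K → Set ℕ, (∀ k, D k ∈ q k) ∧ Pairwise (Function.onFun Disjoint D) ∧
      ∀ k, ∀ n ∈ D k, ∀ l, ∀ n' ∈ D l, n' < n → blk n' + 2 ≤ blk n := by
  have hblk : Tendsto blk atTop atTop := tendsto_atTop.2 fun i =>
    (eventually_ge_atTop (m i)).mono fun n => (hgc i n).1
  have hhalf : Tendsto (fun b : ℕ => b / 2) atTop atTop :=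
    Nat.tendsto_div_const_atTop two_ne_zero
  obtain ⟨D₀, hD₀, hD₀sep⟩ := exists_mem_forall_eq_of_apply_eq hsel hinc (hhalf.comp hblk)
  obtain ⟨D₁, hD₁, hD₁sep⟩ := exists_mem_forall_eq_of_apply_eq hsel hinc
    (f := fun n => (blk n + 1) / 2) (hhalf.comp ((tendsto_add_atTop_nat 1).comp hblk))
  refine ⟨fun k => D₀ k ∩ D₁ k, fun k => Filter.inter_mem (hD₀ k) (hD₁ k), ?_, ?_⟩
  · exact fun k l hkl => Set.disjoint_left.2 fun n hk hl =>
      hkl (hD₀sep k n hk.1 l n hl.1 rfl).1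
  · intro k n hn l n' hn' hlt
    have hmono : blk n' ≤ blk n := hgc.monotone_u hlt.le
    by_contra! hclose
    -- two numbers at distance at most one are not separated by both of the pairings
    -- `{2j, 2j + 1}` and `{2j - 1, 2j}`
    obtain h | h : blk n / 2 = blk n' / 2 ∨ (blk n + 1) / 2 = (blk n' + 1) / 2 := by omega
    · exact hlt.ne' (hD₀sep k n hn.1 l n' hn'.1 h).2
    · exact hlt.ne' (hD₁sep k n hn.2 l n' hn'.2 h).2

theorem exists_strictMono_forall_le (G : ℕ → ℕ) :
    ∃ m : ℕ → ℕ, StrictMono m ∧ m 0 = 0 ∧ ∀ i, G (m i) ≤ m (i + 1) :=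
  ⟨fun i => Nat.rec 0 (fun _ a => max (a + 1) (G a)) i,
    strictMono_nat_of_lt_succ fun _ => Nat.lt_of_succ_le (le_max_left _ _), rfl,
    fun _ => le_max_right _ _⟩

theorem exists_sparse_diagonal (hsel : ∀ k, IsSelective (q k))
    (hinc : Pairwise fun k l => RKIncomp (q k) (q l)) {A : K → ℕ → Set ℕ}
    (hA : ∀ k s, A k s ∈ q k) :
    ∃ D : K → Set ℕ, (∀ k, D k ∈ q k) ∧ Pairwise (Function.onFun Disjoint D) ∧
      ∀ k, ∀ n ∈ D k, ∃ s, n ∈ A k s ∧ ∀ l, ∀ n' ∈ D l, n' < n → n' < s := by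
  obtain ⟨e, he⟩ := exists_injective_nat K
  choose Y hYmem hYfin using fun k => (hsel k).isPPoint (A k) (hA k)
  choose g hg using fun k s => (hYfin k s).bddAbove
  have hbound : ∀ s, ∃ b, ∀ k, e k ≤ s → g k s < b := fun s => by
    obtain ⟨b, hb⟩ := (((finite_Iic s).preimage he.injOn).image (g · s)).bddAbove
    exact ⟨b + 1, fun k hk => Nat.lt_succ_of_le (hb (mem_image_of_mem _ hk))⟩
  choose G hG using hbound
  obtain ⟨m, hm, hm0, hmG⟩ := exists_strictMono_forall_le G
  obtain ⟨blk, hgc⟩ := exists_galoisConnection_of_strictMono hm hm0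
  obtain ⟨D, hDmem, hDdisj, hDsep⟩ := exists_separated_blocks hsel hinc hgc
  have hlate : ∀ k, Ici (m (e k + 1)) ∈ q k := fun k => (hsel k).1.le_atTop (Ici_mem_atTop _)
  refine ⟨fun k => D k ∩ Y k ∩ Ici (m (e k + 1)), fun k =>
    Filter.inter_mem (Filter.inter_mem (hDmem k) (hYmem k)) (hlate k),
    fun k l hkl => (hDdisj hkl).mono (fun _ h => h.1.1) fun _ h => h.1.1, ?_⟩
  rintro k n ⟨⟨hnD, hnY⟩, hnk : m (e k + 1) ≤ n⟩
  obtain ⟨i, hi⟩ : ∃ i, blk n = i + 1 := Nat.exists_eq_succ_of_ne_zero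
    ((Nat.succ_pos _).trans_le ((hgc _ _).1 hnk)).ne'
  have hki : e k ≤ i := Nat.le_of_succ_le_succ (((hgc _ _).1 hnk).trans_eq hi)
  refine ⟨m i, ?_, fun l n' hn' hlt => ?_⟩
  · by_contra hnA
    have hlarge : G (m i) ≤ n := (hmG i).trans ((hgc _ _).2 hi.ge)
    exact (hlarge.trans (hg k (m i) ⟨hnY, hnA⟩)).not_gt (hG _ _ (hki.trans hm.le_apply))
  · have hsep := hDsep k n hnD l n' hn'.1.1 hlt
    exact not_le.1 fun h => by have := (hgc _ _).1 h; omega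

theorem exists_run (hsel : ∀ k, IsSelective (q k))
    (hinc : Pairwise fun k l => RKIncomp (q k) (q l)) {R : K → S → ℕ → S → Prop}
    (hR : ∀ k a, ∀ᶠ n in q k, ∃ b, R k a n b) (a₀ : S) :
    ∃ (D : K → Set ℕ) (st : ℕ → S), (∀ k, D k ∈ q k) ∧ st 0 = a₀ ∧
      (∀ k, ∀ n ∈ D k, R k (st n) n (st (n + 1))) ∧
      ∀ n, (∀ k, n ∉ D k) → st (n + 1) = st n := by
  have : Nonempty S := ⟨a₀⟩
  obtain ⟨e, he⟩ := exists_injective_nat K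
  let step : K → S → ℕ → S := fun k a n => Classical.epsilon (R k a n)
  obtain ⟨F, hFfin, hF0, hFmono, hFstep⟩ := exists_finite_reachable he step a₀
  -- Before the run is known, a move is demanded from every state reachable by time `s`: there are
  -- only finitely many of these.
  have hA : ∀ k s, {n | max (e k) s ≤ n ∧ ∀ a ∈ F s, ∃ b, R k a n b} ∈ q k := fun k s =>
    Filter.inter_mem ((hsel k).1.le_atTop (eventually_ge_atTop _))
      ((Filter.eventually_all_finite (hFfin s)).2 fun a _ => hR k a)
  obtain ⟨D, hDmem, hDdisj, hD⟩ := exists_sparse_diagonal hsel hinc hA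
  obtain ⟨own, hown⟩ := exists_option_eq_some_iff_mem hDdisj
  let st : ℕ → S := fun n => Nat.rec a₀ (fun n a => (own n).elim a fun k => step k a n) n
  have hmove : ∀ k, ∀ n ∈ D k, st (n + 1) = step k (st n) n := fun k n hn => by
    simp only [st, (hown k n).2 hn, Option.elim_some]
  have hstay : ∀ n, (∀ k, n ∉ D k) → st (n + 1) = st n := fun n hn => by
    have hnone : own n = none :=
      Option.eq_none_iff_forall_ne_some.2 fun k hk => hn k ((hown k n).1 hk)
    simp only [st, hnone, Option.elim_none]
  have hreach : ∀ n, st n ∈ F n := fun n => by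
    induction n with
    | zero => exact hF0
    | succ n ih =>
      by_cases hn : ∃ k, n ∈ D k
      · obtain ⟨k, hk⟩ := hn
        obtain ⟨s, ⟨hks, -⟩, -⟩ := hD k n hk
        exact hmove k n hk ▸ hFstep k n ((le_max_left _ _).trans hks) _ ih
      · exact hstay n (not_exists.1 hn) ▸ hFmono n.le_succ ih
  refine ⟨D, st, hDmem, rfl, fun k n hn => ?_, hstay⟩
  obtain ⟨s, ⟨hsn, hRs⟩, hbefore⟩ := hD k n hn
  have hidle : ∀ j, s ≤ j → j < n → st (j + 1) = st j := fun j hsj hjn =>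
    hstay j fun l hl => (hbefore l j hl hjn).not_ge hsj
  have hconst : st n = st s :=
    Nat.le_induction (P := fun j _ => j ≤ n → st j = st s) (fun _ => rfl)
      (fun j hsj ih hjn => (hidle j hsj hjn).trans (ih (Nat.le_of_succ_le hjn)))
      n ((le_max_right _ _).trans hsn) le_rfl
  rw [hmove k n hn]
  exact Classical.epsilon_spec (hRs _ (hconst ▸ hreach s))

end Runs

section Torus

theorem toCircle_sum {β : Type*} (s : Finset β) (z : β → UnitAddCircle) :
    (∑ i ∈ s, z i).toCircle = ∏ i ∈ s, (z i).toCircle :=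
  map_prod AddCircle.toCircle_addChar.toMonoidHom (fun i => Multiplicative.ofAdd (z i)) s

theorem toCircle_half : (AddCircle.toCircle ((1 / 2 : ℝ) : UnitAddCircle) : ℂ) = -1 := by
  rw [AddCircle.toCircle_apply_mk, Circle.coe_exp, ← Complex.exp_pi_mul_I]
  congr 2
  push_cast
  ring

theorem zsmul_half_inv {a : ℤ} (ha : a ≠ 0) :
    a • ((1 / (2 * a) : ℝ) : UnitAddCircle) = ((1 / 2 : ℝ) : UnitAddCircle) := by
  have ha' : (a : ℝ) ≠ 0 := Int.cast_ne_zero.2 ha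
  rw [← AddCircle.coe_zsmul, zsmul_eq_mul]
  congr 1
  field_simp

theorem norm_half_inv_lt {a : ℤ} {δ : ℝ} (hδ : 0 < δ) (ha : 1 / δ < |(a : ℝ)|) :
    ‖((1 / (2 * a) : ℝ) : UnitAddCircle)‖ < δ := by
  have hpos : 0 < |(a : ℝ)| := (by positivity : 0 < 1 / δ).trans ha
  calc ‖((1 / (2 * a) : ℝ) : UnitAddCircle)‖ ≤ |1 / (2 * a : ℝ)| :=
        QuotientAddGroup.norm_mk_le_norm
    _ = 1 / |(a : ℝ)| / 2 := by rw [abs_div, abs_mul, abs_one, abs_two]; field_simp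
    _ < 1 / |(a : ℝ)| := half_lt_self (by positivity)
    _ < δ := (one_div_lt hδ hpos).1 ha

variable {ι : Type*} [Fintype ι]

open MeasureTheory UnitAddTorus

theorem mFourier_eq_toCircle (m : ι → ℤ) (z : UnitAddTorus ι) :
    mFourier m z = ((∑ i, m i • z i).toCircle : ℂ) := by
  rw [toCircle_sum]
  exact (map_prod Circle.coeHom _ _).symm

theorem mFourier_apply_add (m : ι → ℤ) (y z : UnitAddTorus ι) :
    mFourier m (y + z) = mFourier m y * mFourier m z := by
  simp only [mFourier_eq_toCircle, Pi.add_apply, smul_add, Finset.sum_add_distrib,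
    AddCircle.toCircle_add, Circle.coe_mul]

theorem mFourier_apply_sum {β : Type*} (m : ι → ℤ) (s : Finset β) (z : β → UnitAddTorus ι) :
    mFourier m (∑ b ∈ s, z b) = ∏ b ∈ s, mFourier m (z b) := by
  classical
  induction s using Finset.induction_on with
  | empty => simp only [Finset.sum_empty, Finset.prod_empty, mFourier_eq_toCircle, Pi.zero_apply,
      smul_zero, Finset.sum_const_zero, AddCircle.toCircle_zero, Circle.coe_one]
  | insert b s hb ih => rw [Finset.sum_insert hb, Finset.prod_insert hb, mFourier_apply_add, ih]

theorem integral_mFourier_of_ne_zero {m : ι → ℤ} (hm : m ≠ 0) (μ : Measure (UnitAddTorus ι))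
    [μ.IsAddRightInvariant] : ∫ z, mFourier m z ∂μ = 0 := by
  classical
  obtain ⟨i, hi⟩ := Function.ne_iff.1 hm
  obtain ⟨w, hw⟩ : ∃ w, mFourier m w = -1 := by
    use Pi.single i ((1 / (2 * m i) : ℝ) : UnitAddCircle)
    rw [mFourier_eq_toCircle, Finset.sum_eq_single i, Pi.single_eq_same, zsmul_half_inv hi,
      toCircle_half]
    · exact fun j _ hji => by rw [Pi.single_eq_of_ne hji, smul_zero]
    · exact fun h => absurd (Finset.mem_univ i) h
  refine integral_eq_zero_of_add_right_eq_neg (g := w) fun z => ?_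
  rw [mFourier_apply_add, hw, mul_neg_one]

/-- The trigonometric polynomial on the torus with coefficients `c`. -/
def trigPoly (c : (ι → ℤ) →₀ ℂ) : C(UnitAddTorus ι, ℂ) :=
  Finsupp.linearCombination ℂ mFourier c

theorem trigPoly_apply (c : (ι → ℤ) →₀ ℂ) (z : UnitAddTorus ι) :
    trigPoly c z = ∑ m ∈ c.support, c m * mFourier m z := by
  rw [trigPoly, Finsupp.linearCombination_apply, Finsupp.sum, ContinuousMap.sum_apply]
  rfl

theorem exists_trigPoly_norm_sub_lt (g : C(UnitAddTorus ι, ℂ)) {η : ℝ} (hη : 0 < η) :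
    ∃ c : (ι → ℤ) →₀ ℂ, ∀ z, ‖g z - trigPoly c z‖ < η := by
  have hdense : g ∈ (Submodule.span ℂ (range (mFourier (d := ι)))).topologicalClosure :=
    span_mFourier_closure_eq_top (d := ι) ▸ Submodule.mem_top
  obtain ⟨v, hv, hvd⟩ := Metric.mem_closure_iff.1 hdense η hη
  obtain ⟨c, rfl⟩ := Finsupp.mem_span_range_iff_exists_finsupp.1 hv
  exact ⟨c, fun z => (dist_eq_norm (g z) _).symm.trans_lt
    ((ContinuousMap.dist_apply_le_dist z).trans_lt hvd)⟩

theorem integral_trigPoly (c : (ι → ℤ) →₀ ℂ) (μ : Measure (UnitAddTorus ι))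
    [IsProbabilityMeasure μ] [μ.IsAddRightInvariant] : ∫ z, trigPoly c z ∂μ = c 0 := by
  have hint : ∀ m ∈ c.support, Integrable (fun z => c m * mFourier m z) μ := fun m _ =>
    ((mFourier m).continuous.integrable_of_hasCompactSupport
      (HasCompactSupport.of_compactSpace _)).const_mul _
  simp only [trigPoly_apply]
  rw [integral_finsetSum _ hint, Finset.sum_eq_single 0]
  · simp only [mFourier_zero, ContinuousMap.one_apply, mul_one, integral_const, probReal_univ,
      one_smul]
  · exact fun m _ hm => by rw [integral_const_mul, integral_mFourier_of_ne_zero hm, mul_zero]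
  · exact fun h => by simp only [Finsupp.notMem_support_iff.1 h, zero_mul, integral_zero]

theorem exists_trigPoly_re_neg_of_le_norm {ε : ℝ} (hε : 0 < ε) :
    ∃ c : (ι → ℤ) →₀ ℂ, 0 < (c 0).re ∧ ∀ z : UnitAddTorus ι, ε ≤ ‖z‖ → (trigPoly c z).re < 0 := by
  have : IsProbabilityMeasure (volume : Measure (UnitAddTorus ι)) :=
    ⟨by simp only [volume_pi, Measure.pi_univ, UnitAddCircle.measure_univ, Finset.prod_const_one]⟩
  let u : UnitAddTorus ι → ℝ := fun z => max 0 (ε - ‖z‖)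
  have hu : Continuous u := by fun_prop
  have hI : 0 < ∫ z, u z := hu.integral_pos_of_hasCompactSupport_nonneg_nonzero (x := 0)
    (HasCompactSupport.of_compactSpace u) (fun z => le_max_left _ _) (by simp [u, hε])
  set I := ∫ z, u z
  obtain ⟨c, hc⟩ := exists_trigPoly_norm_sub_lt ⟨fun z => ((u z - I / 2 : ℝ) : ℂ), by fun_prop⟩
    (by positivity : 0 < I / 4)
  have hre : ∀ z, |(u z - I / 2) - (trigPoly c z).re| < I / 4 := fun z =>
    (Complex.abs_re_le_norm _).trans_lt (hc z)
  refine ⟨c, ?_, fun z hz => ?_⟩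
  · have hint : ∀ {f : UnitAddTorus ι → ℝ}, Continuous f → Integrable f := fun hf =>
      hf.integrable_of_hasCompactSupport (HasCompactSupport.of_compactSpace _)
    have hcre : Continuous fun z => (trigPoly c z).re := by fun_prop
    have hcint : Integrable (trigPoly c) :=
      (trigPoly c).continuous.integrable_of_hasCompactSupport (HasCompactSupport.of_compactSpace _)
    calc 0 < I - 3 * I / 4 := by linarith
      _ = ∫ z, (u z - 3 * I / 4) := by
        rw [integral_sub (hint hu) (integrable_const _), integral_const, probReal_univ, one_smul]
      _ ≤ ∫ z, (trigPoly c z).re := integral_mono (hint (by fun_prop)) (hint hcre) fun z => by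
        linarith [(abs_lt.1 (hre z)).2]
      _ = (c 0).re := by
        rw [← integral_trigPoly c volume]
        exact integral_re hcint
  · have hzero : u z = 0 := max_eq_left (sub_nonpos.2 hz)
    linarith [(abs_lt.1 (hre z)).1]

theorem sum_powerset_mFourier_eq_zero {β : Type*} {m : ι → ℤ} {s : Finset β}
    {w : β → UnitAddTorus ι} {b : β} (hb : b ∈ s) (hw : mFourier m (w b) = -1)
    (y : UnitAddTorus ι) : ∑ t ∈ s.powerset, mFourier m (y + ∑ j ∈ t, w j) = 0 := by
  simp only [mFourier_apply_add, mFourier_apply_sum]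
  rw [← Finset.mul_sum, ← Finset.prod_one_add, Finset.prod_eq_zero hb, mul_zero]
  rw [hw, add_neg_cancel]

theorem exists_finset_forall_exists_norm_add_sum_lt {ε : ℝ} (hε : 0 < ε) :
    ∃ M : Finset (ι → ℤ), 0 ∉ M ∧ ∀ w : (ι → ℤ) → UnitAddTorus ι,
      (∀ m ∈ M, ∑ i, m i • w m i = ((1 / 2 : ℝ) : UnitAddCircle)) →
      ∀ y : UnitAddTorus ι, ∃ b ⊆ M, ‖y + ∑ m ∈ b, w m‖ < ε := by
  obtain ⟨c, hc0, hc⟩ := exists_trigPoly_re_neg_of_le_norm (ι := ι) hε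
  refine ⟨c.support.erase 0, Finset.notMem_erase _ _, fun w hw y => ?_⟩
  set M := c.support.erase 0
  have hvanish : ∀ m ∈ M, ∑ b ∈ M.powerset, mFourier m (y + ∑ j ∈ b, w j) = 0 := fun m hm =>
    sum_powerset_mFourier_eq_zero hm (by rw [mFourier_eq_toCircle, hw m hm, toCircle_half]) y
  have hsum : ∑ b ∈ M.powerset, trigPoly c (y + ∑ m ∈ b, w m) = M.powerset.card * c 0 := by
    simp only [trigPoly_apply]
    rw [Finset.sum_comm, Finset.sum_eq_single 0]
    · simp only [mFourier_zero, ContinuousMap.one_apply, mul_one, Finset.sum_const, nsmul_eq_mul]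
    · exact fun m hm hm0 => by
        rw [← Finset.mul_sum, hvanish m (Finset.mem_erase.2 ⟨hm0, hm⟩), mul_zero]
    · exact fun h => by
        simp only [Finsupp.notMem_support_iff.1 h, zero_mul, Finset.sum_const_zero]
  by_contra! hfar
  have hneg : ∑ b ∈ M.powerset, (trigPoly c (y + ∑ m ∈ b, w m)).re ≤ 0 :=
    Finset.sum_nonpos fun b hb => (hc _ (hfar b (Finset.mem_powerset.1 hb))).le
  rw [← Complex.re_sum, hsum, ← nsmul_eq_mul, Complex.re_nsmul, nsmul_eq_mul] at hneg
  have hcard : (0 : ℝ) < M.powerset.card := Nat.cast_pos.2 (Finset.powerset_nonempty M).card_pos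
  exact hneg.not_gt (mul_pos hcard hc0)

end Torus

section Characters

variable {C : Type*}

/-- The homomorphism `ℤ^(C) → 𝕋` with prescribed values on the generators, as a homomorphism in the
family of prescribed values too. -/
def charHom : (C → UnitAddCircle) →+ (C →₀ ℤ) →+ UnitAddCircle :=
  Finsupp.liftAddHom.toAddMonoidHom.comp
    ((zmultiplesAddHom UnitAddCircle).toAddMonoidHom.compLeft C)

theorem charHom_apply (x : C → UnitAddCircle) (g : C →₀ ℤ) :
    charHom x g = g.sum fun c a => a • x c :=
  rfl

theorem charHom_single (x : C → UnitAddCircle) (c : C) (a : ℤ) :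
    charHom x (Finsupp.single c a) = a • x c :=
  Finsupp.sum_single_index (zero_zsmul _)

theorem charHom_pi_single [DecidableEq C] (c : C) (z : UnitAddCircle) (g : C →₀ ℤ) :
    charHom (Pi.single c z) g = g c • z := by
  rw [charHom_apply, Finsupp.sum_eq_single c, Pi.single_eq_same]
  · exact fun c' _ hne => by rw [Pi.single_eq_of_ne hne, smul_zero]
  · exact fun _ => zero_zsmul _

theorem charHom_congr {x y : C → UnitAddCircle} {g : C →₀ ℤ} (h : ∀ c ∈ g.support, x c = y c) :
    charHom x g = charHom y g := by
  rw [charHom_apply, charHom_apply]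
  exact Finsupp.sum_congr fun c hc => by rw [h c hc]

theorem continuous_charHom (g : C →₀ ℤ) : Continuous fun x : C → UnitAddCircle => charHom x g := by
  simp only [charHom_apply, Finsupp.sum]
  fun_prop

/-- Sequences in an abelian group that are independent along `p` modulo the constant sequences: no
nontrivial integer combination of them is constant on a set in `p`. For `G = ℤ^(κ)` this is
`ℚ`-linear independence together with the constant sequences in the ultrapower, with denominators
cleared. -/
def IndependentModConst {ι G : Type*} [AddCommGroup G] (p : Filter ℕ) (f : ι → ℕ → G) : Prop :=
  ∀ m : ι →₀ ℤ, m ≠ 0 → ∀ a, ¬ ∀ᶠ n in p, (m.sum fun i c => c • f i n) = a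

theorem IndependentModConst.comp {ι ι' G : Type*} [AddCommGroup G] {p : Filter ℕ} {f : ι → ℕ → G}
    (hf : IndependentModConst p f) {e : ι' → ι} (he : Function.Injective e) :
    IndependentModConst p (f ∘ e) := by
  intro m hm a hev
  have hne : m.mapDomain e ≠ 0 := fun h =>
    hm (Finsupp.mapDomain_injective he (h.trans Finsupp.mapDomain_zero.symm))
  refine hf _ hne a (hev.mono fun n hn => ?_)
  rwa [Finsupp.sum_mapDomain_index (fun _ => zero_zsmul _) fun _ _ _ => add_zsmul _ _ _]

theorem independentModConst_of_injective {ι G : Type*} [Subsingleton ι] [AddCommGroup G]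
    [IsAddTorsionFree G] {p : Filter ℕ} [p.NeBot] (hp : p ≤ cofinite) {f : ι → ℕ → G}
    (hf : ∀ i, Function.Injective (f i)) : IndependentModConst p f := by
  intro m hm a hev
  obtain ⟨i, hi⟩ := Finsupp.ne_iff.1 hm
  have hsum : ∀ n, (m.sum fun i c => c • f i n) = m i • f i n := fun n =>
    Finsupp.sum_eq_single i (fun j _ hji => absurd (Subsingleton.elim j i) hji)
      fun _ => zero_zsmul _
  have hinj : Function.Injective fun n => m i • f i n :=
    (zsmul_right_injective hi).comp (hf i)
  have hfin : {n | m i • f i n = a}.Finite :=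
    Set.Subsingleton.finite fun n hn n' hn' => hinj (hn.trans hn'.symm)
  obtain ⟨n, hn, hna⟩ := (hev.and (hp hfin.compl_mem_cofinite)).exists
  exact hna ((hsum n).symm.trans hn)

theorem cls_const (κ : Cardinal) (p : Ultrafilter ℕ) (a : GZ κ) :
    cls κ p (fun _ => a) = a.sum fun ζ c => c • clsChi κ p ζ := by
  let constHom : GZ κ →+ (ℕ → GZ κ) := Pi.constAddMonoidHom ℕ (GZ κ)
  calc cls κ p (fun _ => a)
      = (clsHom κ p).comp constHom (a.sum fun ζ c => c • chi κ ζ) := by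
        simp only [chi, Finsupp.smul_single_one, Finsupp.sum_single]
        rfl
    _ = a.sum fun ζ c => c • clsChi κ p ζ := by
        simp only [map_finsuppSum, map_zsmul]
        rfl

theorem independentModConst_of_linearIndependent {κ : Cardinal} {p : Ultrafilter ℕ} {ι : Type*}
    {f : ι → ℕ → GZ κ}
    (hli : LinearIndependent ℚ (Sum.elim (fun i => cls κ p (f i)) (clsChi κ p))) :
    IndependentModConst p f := by
  intro m hm a hev
  have hliInt : LinearIndependent ℤ (Sum.elim (fun i => cls κ p (f i)) (clsChi κ p)) :=
    hli.restrict_scalars (by simpa only [zsmul_one] using Int.cast_injective)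
  have hrel : (m.sum fun i c => c • cls κ p (f i)) = a.sum fun ζ c => c • clsChi κ p ζ :=
    calc (m.sum fun i c => c • cls κ p (f i)) = clsHom κ p (m.sum fun i c => c • f i) := by
          simp only [map_finsuppSum, map_zsmul]
          rfl
      _ = cls κ p (fun _ => a) := Filter.Germ.coe_eq.2 (hev.mono fun n hn => by
          change toQ κ _ = toQ κ _
          rw [← hn]
          simp only [Finsupp.sum, Finset.sum_apply, Pi.smul_apply])
      _ = _ := cls_const κ p a
  have hzero : Finsupp.sumElim m (-a) = 0 := by
    refine linearIndependent_iff.1 hliInt _ ?_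
    simp only [Finsupp.linearCombination_apply, Finsupp.sum_sumElim, Function.comp_def,
      Sum.elim_inl, Sum.elim_inr]
    rw [hrel, Finsupp.sum_neg_index fun _ => zero_zsmul _]
    simp only [neg_smul, Finsupp.sum_neg, add_neg_cancel]
  exact hm (Finsupp.ext fun i => DFunLike.congr_fun hzero (Sum.inl i))

theorem exists_charHom_eq_half {E : Finset C} {δ : ℝ} (hδ : 0 < δ) {g : C →₀ ℤ} {c : C}
    (hc : g c ≠ 0) (hlarge : c ∈ E → 1 / δ < |(g c : ℝ)|) :
    ∃ w : C → UnitAddCircle, (∀ c ∈ E, ‖w c‖ < δ) ∧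
      charHom w g = ((1 / 2 : ℝ) : UnitAddCircle) := by
  classical
  refine ⟨Pi.single c ((1 / (2 * g c) : ℝ) : UnitAddCircle), fun c' hc' => ?_, ?_⟩
  · obtain rfl | hne := eq_or_ne c' c
    · rw [Pi.single_eq_same]
      exact norm_half_inv_lt hδ (hlarge hc')
    · rwa [Pi.single_eq_of_ne hne, norm_zero]
  · rw [charHom_pi_single, zsmul_half_inv hc]

theorem exists_finset_forall_norm_lt_mem {A : Type*} [SeminormedAddCommGroup A] {V : Set (C → A)}
    (hV : V ∈ nhds 0) :
    ∃ E : Finset C, ∃ δ > 0, ∀ w : C → A, (∀ c ∈ E, ‖w c‖ < δ) → w ∈ V := by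
  rw [nhds_pi] at hV
  obtain ⟨⟨E, ε⟩, ⟨hE, hε⟩, hsub⟩ :=
    (Filter.hasBasis_pi fun _ => Metric.nhds_basis_ball).mem_iff.1 hV
  have hsmall : ∀ᶠ δ in nhdsWithin (0 : ℝ) (Ioi 0), ∀ c ∈ E, δ ≤ ε c :=
    (Filter.eventually_all_finite hE).2 fun c hc => nhdsWithin_le_nhds (Iic_mem_nhds (hε c hc))
  obtain ⟨δ, hδε, hδ⟩ := (hsmall.and self_mem_nhdsWithin).exists
  refine ⟨hE.toFinset, δ, hδ, fun w hw => hsub fun c hc => mem_ball_zero_iff.2 ?_⟩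
  exact (hw c (hE.mem_toFinset.2 hc)).trans_le (hδε c hc)

theorem finite_forall_charHom_ne_half {V : Set (C → UnitAddCircle)} (hV : V ∈ nhds 0) :
    {g : C →₀ ℤ | ∀ w ∈ V, charHom w g ≠ ((1 / 2 : ℝ) : UnitAddCircle)}.Finite := by
  classical
  obtain ⟨E, δ, hδ, hEV⟩ := exists_finset_forall_norm_lt_mem hV
  let bound : C →₀ ℤ := Finsupp.indicator E fun _ _ => ⌊1 / δ⌋
  have hbound : 0 ≤ bound := fun c => by
    rw [Finsupp.indicator_apply]
    split_ifs
    exacts [Int.floor_nonneg.2 (one_div_pos.2 hδ).le, le_rfl]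
  refine (Set.finite_Icc (-bound) bound).subset fun g hg => ?_
  have hsmall : ∀ c, |g c| ≤ bound c := fun c => by
    by_contra! hlt
    have hc : g c ≠ 0 := abs_pos.1 ((hbound c).trans_lt hlt)
    have hlarge : c ∈ E → 1 / δ < |(g c : ℝ)| := fun hcE => by
      rw [← Int.cast_abs, ← Int.floor_lt]
      exact (Finsupp.indicator_of_mem hcE _).symm.trans_lt hlt
    obtain ⟨w, hwE, hw⟩ := exists_charHom_eq_half hδ hc hlarge
    exact hg w (hEV w hwE) hw
  exact ⟨fun c => (abs_le.1 (hsmall c)).1, fun c => (abs_le.1 (hsmall c)).2⟩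

theorem eventually_exists_charHom_eq_half {p : Ultrafilter ℕ} {g : ℕ → C →₀ ℤ}
    (hg : ∀ a, ¬ ∀ᶠ n in p, g n = a) {V : Set (C → UnitAddCircle)} (hV : V ∈ nhds 0) :
    ∀ᶠ n in p, ∃ w ∈ V, charHom w (g n) = ((1 / 2 : ℝ) : UnitAddCircle) := by
  by_contra h
  obtain ⟨a, ha⟩ := exists_eventually_eq_of_eventually_mem_finite
    (finite_forall_charHom_ne_half hV)
    ((Ultrafilter.eventually_not.2 h).mono fun n hn w hw hhalf => hn ⟨w, hw, hhalf⟩)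
  exact hg a ha

theorem exists_nhds_forall_add_sum_mem {X β : Type*} [AddCommMonoid X] [TopologicalSpace X]
    [ContinuousAdd X] {x : X} {U : Set X} (hU : U ∈ nhds x) (M : Finset β) :
    ∃ V : β → Set X, (∀ b, V b ∈ nhds 0) ∧
      ∀ w : β → X, (∀ b, w b ∈ V b) → ∀ s ⊆ M, x + ∑ b ∈ s, w b ∈ U := by
  have hmem : {w : β → X | ∀ s ∈ M.powerset, x + ∑ b ∈ s, w b ∈ U} ∈ nhds 0 := by
    refine (Filter.eventually_all_finset _).2 fun s _ => ?_
    have hcont : Continuous fun w : β → X => x + ∑ b ∈ s, w b := by fun_prop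
    refine hcont.tendsto' 0 x ?_ hU
    simp only [Pi.zero_apply, Finset.sum_const_zero, add_zero]
  rw [nhds_pi, Filter.mem_pi] at hmem
  obtain ⟨I, -, V, hV, hsub⟩ := hmem
  exact ⟨V, hV, fun w hw s hs => hsub (fun b _ => hw b) s (Finset.mem_powerset.2 hs)⟩

theorem eventually_exists_sum_zsmul_charHom_eq_half {ι : Type*} [Fintype ι] {p : Ultrafilter ℕ}
    {f : ι → ℕ → C →₀ ℤ} (hf : IndependentModConst p f) {m : ι → ℤ} (hm : m ≠ 0)
    {V : Set (C → UnitAddCircle)} (hV : V ∈ nhds 0) :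
    ∀ᶠ n in p, ∃ w ∈ V, ∑ i, m i • charHom w (f i n) = ((1 / 2 : ℝ) : UnitAddCircle) := by
  have hm0 : Finsupp.equivFunOnFinite.symm m ≠ 0 := mt (congrArg Finsupp.equivFunOnFinite) hm
  refine (eventually_exists_charHom_eq_half (hf _ hm0) hV).mono ?_
  rintro n ⟨w, hw, hhalf⟩
  refine ⟨w, hw, hhalf ▸ ?_⟩
  rw [Finsupp.sum_fintype _ _ fun _ => zero_zsmul _, map_sum]
  simp only [map_zsmul, Finsupp.equivFunOnFinite_symm_apply_apply]

theorem eventually_exists_forall_dist_charHom_lt {ι : Type*} [Finite ι] {p : Ultrafilter ℕ}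
    {f : ι → ℕ → C →₀ ℤ} (hf : IndependentModConst p f) (t : ι → C →₀ ℤ) {ε : ℝ} (hε : 0 < ε)
    {U : Set (C → UnitAddCircle)} (hU : IsOpen U) (hne : U.Nonempty) :
    ∀ᶠ n in p, ∃ x ∈ U, ∀ i, dist (charHom x (f i n)) (charHom x (t i)) < ε := by
  cases nonempty_fintype ι
  obtain ⟨x₀, hx₀⟩ := hne
  obtain ⟨M, hM0, hM⟩ := exists_finset_forall_exists_norm_add_sum_lt (ι := ι) (half_pos hε)
  have hW : U ∩ {x | ∀ i, dist (charHom x (t i)) (charHom x₀ (t i)) < ε / 2} ∈ nhds x₀ := by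
    refine Filter.inter_mem (hU.mem_nhds hx₀) (Filter.eventually_all.2 fun i => ?_)
    exact (continuous_charHom (t i)).continuousAt (Metric.ball_mem_nhds _ (half_pos hε))
  obtain ⟨V, hV, hVW⟩ := exists_nhds_forall_add_sum_mem hW M
  have hhalf : ∀ᶠ n in p, ∀ m ∈ M, ∃ w ∈ V m,
      ∑ i, m i • charHom w (f i n) = ((1 / 2 : ℝ) : UnitAddCircle) :=
    (Filter.eventually_all_finset M).2 fun m hm =>
      eventually_exists_sum_zsmul_charHom_eq_half hf (fun h => hM0 (h ▸ hm)) (hV m)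
  filter_upwards [hhalf] with n hn
  have hshift : ∀ m, ∃ w ∈ V m, m ∈ M →
      ∑ i, m i • charHom w (f i n) = ((1 / 2 : ℝ) : UnitAddCircle) := fun m => by
    by_cases hm : m ∈ M
    · obtain ⟨w, hw, hhalf⟩ := hn m hm
      exact ⟨w, hw, fun _ => hhalf⟩
    · exact ⟨0, mem_of_mem_nhds (hV m), fun h => absurd h hm⟩
  choose w hwV hw using hshift
  obtain ⟨b, hbM, hb⟩ := hM (fun m i => charHom (w m) (f i n)) hw
    fun i => charHom x₀ (f i n) - charHom x₀ (t i)
  obtain ⟨hxU, hxt⟩ := hVW w hwV b hbM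
  refine ⟨x₀ + ∑ m ∈ b, w m, hxU, fun i => ?_⟩
  have hxf : dist (charHom (x₀ + ∑ m ∈ b, w m) (f i n)) (charHom x₀ (t i)) < ε / 2 := by
    refine ((dist_eq_norm _ _).trans_le ?_).trans_lt ((norm_le_pi_norm _ i).trans_lt hb)
    simp only [map_add, map_sum, AddMonoidHom.add_apply, AddMonoidHom.finsetSum_apply,
      Pi.add_apply, Finset.sum_apply]
    rw [sub_add_eq_add_sub]
  linarith [dist_triangle_right (charHom (x₀ + ∑ m ∈ b, w m) (f i n))
    (charHom (x₀ + ∑ m ∈ b, w m) (t i)) (charHom x₀ (t i)), hxt i]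

end Characters

section Countable

open TopologicalSpace

variable {C : Type*}

theorem eventually_exists_positiveCompacts_forall_dist_lt {ι : Type*} [Finite ι] {p : Ultrafilter ℕ}
    {f : ι → ℕ → C →₀ ℤ} (hf : IndependentModConst p f) (t : ι → C →₀ ℤ) {ε : ℝ} (hε : 0 < ε)
    (A : PositiveCompacts (C → UnitAddCircle)) :
    ∀ᶠ n in p, ∃ B : PositiveCompacts (C → UnitAddCircle), (B : Set (C → UnitAddCircle)) ⊆ A ∧
      ∀ x ∈ B, ∀ i, dist (charHom x (f i n)) (charHom x (t i)) < ε := by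
  filter_upwards [eventually_exists_forall_dist_charHom_lt hf t hε isOpen_interior
    A.interior_nonempty] with n ⟨x, hxA, hx⟩
  have hopen : IsOpen {x | ∀ i, dist (charHom x (f i n)) (charHom x (t i)) < ε} := by
    simp only [Set.ofPred_forall]
    exact isOpen_iInter_of_finite fun i =>
      isOpen_lt ((continuous_charHom _).dist (continuous_charHom _)) continuous_const
  obtain ⟨B, hB⟩ := exists_positiveCompacts_subset (isOpen_interior.inter hopen)
    ⟨x, hxA, hx⟩
  exact ⟨B, fun y hy => interior_subset (hB hy).1, fun y hy => (hB hy).2⟩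

theorem exists_positiveCompacts_forall_charHom_ne_zero {d : C →₀ ℤ} (hd : d ≠ 0) :
    ∃ A : PositiveCompacts (C → UnitAddCircle), ∀ x ∈ A, charHom x d ≠ 0 := by
  classical
  obtain ⟨c, hc⟩ := Finsupp.ne_iff.1 hd
  obtain ⟨w, -, hw⟩ := exists_charHom_eq_half (E := ∅) one_pos hc
    fun h => absurd h (Finset.notMem_empty c)
  have hhalf : ((1 / 2 : ℝ) : UnitAddCircle) ≠ 0 := fun h => by
    have := toCircle_half
    rw [h, AddCircle.toCircle_zero] at this
    norm_num at this
  exact exists_positiveCompacts_subset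
    (isOpen_ne_fun (continuous_charHom d) continuous_const) ⟨w, hw.trans_ne hhalf⟩

theorem tendsto_atTop_of_frequently_lt_succ {s : ℕ → ℕ} (hs : Monotone s)
    (hlt : ∃ᶠ n in atTop, s n < s (n + 1)) : Tendsto s atTop atTop := by
  refine tendsto_atTop_atTop_of_monotone hs fun b => ?_
  induction b with
  | zero => exact ⟨0, Nat.zero_le _⟩
  | succ b ih =>
    obtain ⟨a, ha⟩ := ih
    obtain ⟨n, han, hn⟩ := frequently_atTop.1 hlt a
    exact ⟨n + 1, Nat.succ_le_of_lt ((ha.trans (hs han)).trans_lt hn)⟩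

variable {K : Type*} [Countable K] {q : K → Ultrafilter ℕ} {I : K → Type*}
  {f : ∀ k, I k → ℕ → C →₀ ℤ}

theorem exists_compact_run (hsel : ∀ k, IsSelective (q k))
    (hinc : Pairwise fun k l => RKIncomp (q k) (q l)) (hf : ∀ k, IndependentModConst (q k) (f k))
    (t : ∀ k, I k → C →₀ ℤ) {e : ∀ k, I k → ℕ} (he : ∀ k, Function.Injective (e k))
    (A₀ : PositiveCompacts (C → UnitAddCircle)) :
    ∃ (A : ℕ → PositiveCompacts (C → UnitAddCircle)) (s : ℕ → ℕ), A 0 = A₀ ∧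
      (∀ n, (A (n + 1) : Set (C → UnitAddCircle)) ⊆ A n) ∧ Monotone s ∧
      ∀ k, ∀ᶠ n in q k, s n < s (n + 1) ∧ ∀ x ∈ A (n + 1), ∀ i, e k i < s n →
        dist (charHom x (f k i n)) (charHom x (t k i)) < 1 / (s n + 1) := by
  let R : K → PositiveCompacts (C → UnitAddCircle) × ℕ → ℕ →
      PositiveCompacts (C → UnitAddCircle) × ℕ → Prop := fun k a n b =>
    ((b.1 : Set (C → UnitAddCircle)) ⊆ a.1 ∧ a.2 < b.2) ∧ ∀ x ∈ b.1, ∀ i, e k i < a.2 →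
      dist (charHom x (f k i n)) (charHom x (t k i)) < 1 / (a.2 + 1)
  have hR : ∀ k a, ∀ᶠ n in q k, ∃ b, R k a n b := fun k a => by
    have : Finite {i // e k i < a.2} := ((Set.finite_Iio a.2).preimage (he k).injOn).to_subtype
    filter_upwards [eventually_exists_positiveCompacts_forall_dist_lt
      ((hf k).comp (Subtype.val_injective (p := fun i => e k i < a.2))) (fun i => t k i)
      (Nat.one_div_pos_of_nat (n := a.2)) a.1] with n ⟨B, hBa, hB⟩
    exact ⟨(B, a.2 + 1), ⟨hBa, Nat.lt_succ_self _⟩, fun x hx i hi => hB x hx ⟨i, hi⟩⟩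
  obtain ⟨D, st, hD, hst0, hmove, hstay⟩ := exists_run hsel hinc hR (A₀, 0)
  have hstep : ∀ n, ((st (n + 1)).1 : Set (C → UnitAddCircle)) ⊆ (st n).1 ∧
      (st n).2 ≤ (st (n + 1)).2 := fun n => by
    by_cases hn : ∃ k, n ∈ D k
    · obtain ⟨k, hk⟩ := hn
      exact ⟨(hmove k n hk).1.1, (hmove k n hk).1.2.le⟩
    · rw [hstay n (not_exists.1 hn)]
      exact ⟨subset_rfl, le_rfl⟩
  exact ⟨fun n => (st n).1, fun n => (st n).2, congrArg Prod.fst hst0, fun n => (hstep n).1,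
    monotone_nat_of_le_succ fun n => (hstep n).2,
    fun k => Filter.mem_of_superset (hD k) fun n hn => ⟨(hmove k n hn).1.2, (hmove k n hn).2⟩⟩

theorem exists_charHom_ne_zero_forall_tendsto [∀ k, Countable (I k)]
    (hsel : ∀ k, IsSelective (q k))
    (hinc : Pairwise fun k l => RKIncomp (q k) (q l)) (hf : ∀ k, IndependentModConst (q k) (f k))
    (t : ∀ k, I k → C →₀ ℤ) {d : C →₀ ℤ} (hd : d ≠ 0) :
    ∃ x : C → UnitAddCircle, charHom x d ≠ 0 ∧
      ∀ k i, Tendsto (fun n => charHom x (f k i n)) (q k) (nhds (charHom x (t k i))) := by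
  choose e he using fun k => exists_injective_nat (I k)
  obtain ⟨A₀, hA₀⟩ := exists_positiveCompacts_forall_charHom_ne_zero hd
  obtain ⟨A, s, hA0, hAmono, hs, hrun⟩ := exists_compact_run hsel hinc hf t he A₀
  obtain ⟨x, hx⟩ := IsCompact.nonempty_iInter_of_sequence_nonempty_isCompact_isClosed
    (fun n => (A n : Set (C → UnitAddCircle))) hAmono (fun n => (A n).nonempty) (A 0).isCompact
    fun n => (A n).isCompact.isClosed
  have hxA : ∀ n, x ∈ A n := Set.mem_iInter.1 hx
  refine ⟨x, hA₀ x (hA0 ▸ hxA 0), fun k i => ?_⟩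
  have hfree : (q k : Filter ℕ) ≤ atTop := (hsel k).1.le_atTop
  have hs_top : Tendsto s atTop atTop := tendsto_atTop_of_frequently_lt_succ hs
    (((hrun k).mono fun _ hn => hn.1).frequently.filter_mono hfree)
  have hε : Tendsto (fun n => 1 / ((s n : ℝ) + 1)) (q k) (nhds 0) :=
    tendsto_one_div_add_atTop_nhds_zero_nat.comp (hs_top.mono_left hfree)
  refine tendsto_iff_dist_tendsto_zero.2
    (squeeze_zero' (Eventually.of_forall fun _ => dist_nonneg) ?_ hε)
  filter_upwards [hrun k, hfree (hs_top.eventually_gt_atTop (e k i))] with n hn hi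
  exact (hn.2 x (hxA (n + 1)) i hi).le

end Countable

section Extension

variable {C ι : Type*}

theorem exists_countable_superset_forall_subset {N : C → Set C} (hN : ∀ c, (N c).Countable)
    {S₀ : Set C} (hS₀ : S₀.Countable) :
    ∃ S : Set C, S.Countable ∧ S₀ ⊆ S ∧ ∀ c ∈ S, N c ⊆ S := by
  let F : ℕ → Set C := fun n => Nat.rec S₀ (fun _ X => ⋃ c ∈ X, N c) n
  have hF : ∀ n, (F n).Countable := fun n => by
    induction n with
    | zero => exact hS₀
    | succ n ih => exact ih.biUnion fun c _ => hN c
  refine ⟨⋃ n, F n, countable_iUnion hF, subset_iUnion F 0, fun c hc => ?_⟩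
  obtain ⟨n, hn⟩ := mem_iUnion.1 hc
  exact (subset_biUnion_of_mem hn).trans (subset_iUnion F (n + 1))

theorem exists_eqOn_forall_tendsto_charHom [LinearOrder C] [WellFoundedLT C]
    (h : C → ℕ → C →₀ ℤ) (S : Set C) (x : C → UnitAddCircle) (u : C → Ultrafilter ℕ) :
    ∃ y : C → UnitAddCircle, EqOn y x S ∧ ∀ ξ ∉ S, (∀ k, ∀ α ∈ (h ξ k).support, α < ξ) →
      Tendsto (fun k => charHom y (h ξ k)) (u ξ) (nhds (y ξ)) := by
  classical
  let F : ∀ ξ : C, (∀ α < ξ, UnitAddCircle) → UnitAddCircle := fun ξ rec =>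
    if ξ ∈ S then x ξ else
      ((u ξ).map fun k => charHom (fun α => if hα : α < ξ then rec α hα else 0) (h ξ k)).lim
  let y : C → UnitAddCircle := (wellFounded_lt (α := C)).fix F
  have hy : ∀ ξ, y ξ = F ξ fun α _ => y α := WellFounded.fix_eq _ F
  refine ⟨y, fun ξ hξ => (hy ξ).trans (if_pos hξ), fun ξ hξ hlt => ?_⟩
  have hbelow : ∀ k, charHom (fun α => if α < ξ then y α else 0) (h ξ k) = charHom y (h ξ k) :=
    fun k => charHom_congr fun α hα => if_pos (hlt k α hα)
  have hlim : y ξ = ((u ξ).map fun k => charHom y (h ξ k)).lim := by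
    rw [hy]
    simp only [F, if_neg hξ, dite_eq_ite, hbelow]
  rw [hlim]
  exact Ultrafilter.le_nhds_lim _

theorem countable_setOf_inter_nonempty {J : ι → Set C} (hJ : Pairwise (Function.onFun Disjoint J))
    {S : Set C} (hS : S.Countable) : {i | (J i ∩ S).Nonempty}.Countable := by
  obtain ⟨own, hown⟩ := exists_option_eq_some_iff_mem hJ
  refine ((hS.image own).preimage (Option.some_injective ι)).mono ?_
  rintro i ⟨ξ, hξJ, hξS⟩
  exact ⟨ξ, hξS, (hown i ξ).2 hξJ⟩

theorem exists_injective_bool_forall_notMem [Uncountable ι] {B : Set ι} (hB : B.Countable) :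
    ∃ s : Bool → ι, Function.Injective s ∧ ∀ b, s b ∉ B := by
  obtain ⟨a, ha⟩ := (ne_univ_iff_exists_notMem B).1 fun h => not_countable_univ (h ▸ hB)
  obtain ⟨b, hb⟩ := (ne_univ_iff_exists_notMem (insert a B)).1 fun h =>
    not_countable_univ (h ▸ hB.insert a)
  obtain ⟨hba, hbB⟩ := not_or.1 hb
  exact ⟨fun c => bif c then a else b, Bool.injective_iff.2 hba,
    Bool.forall_bool.2 ⟨hbB, ha⟩⟩

variable {p : ι → Ultrafilter ℕ} {h : C → ℕ → C →₀ ℤ} {J : ι → Set C} {d : C →₀ ℤ}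
  {r : ℕ → C →₀ ℤ}

theorem exists_charHom_forall_tendsto_of_countable [Uncountable ι] (hsel : ∀ i, IsSelective (p i))
    (hinc : Pairwise fun i j => RKIncomp (p i) (p j)) (hJ : Pairwise (Function.onFun Disjoint J))
    (hind : ∀ i, IndependentModConst (p i) fun ξ : J i => h ξ) {S : Set C} (hS : S.Countable)
    (hd : d ≠ 0) (hr : Function.Injective r) :
    ∃ x : C → UnitAddCircle, charHom x d ≠ 0 ∧
      (∀ i, ∀ ξ ∈ J i ∩ S, Tendsto (fun k => charHom x (h ξ k)) (p i) (nhds (x ξ))) ∧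
      ¬ ∃ l, Tendsto (fun n => charHom x (r n)) atTop (nhds l) := by
  have hB := countable_setOf_inter_nonempty hJ hS
  obtain ⟨s, hs, hsB⟩ := exists_injective_bool_forall_notMem hB
  let idx : {i | (J i ∩ S).Nonempty} ⊕ Bool → ι := Sum.elim Subtype.val s
  have hidx : Function.Injective idx :=
    Subtype.val_injective.sumElim hs fun i b h => hsB b (h ▸ i.2)
  let I : {i | (J i ∩ S).Nonempty} ⊕ Bool → Type _ := Sum.elim (fun i => ↥(J i ∩ S)) fun _ => PUnit
  let f : ∀ k, I k → ℕ → C →₀ ℤ := fun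
    | .inl _, ξ => h ξ.1
    | .inr _, _ => r
  let t : ∀ k, I k → C →₀ ℤ := fun
    | .inl _, ξ => Finsupp.single ξ.1 1
    | .inr b, _ => bif b then d else 0
  have : Countable {i | (J i ∩ S).Nonempty} := hB.to_subtype
  have : ∀ k, Countable (I k) := Sum.rec (fun i => (hS.mono inter_subset_right).to_subtype)
    fun _ => inferInstanceAs (Countable PUnit)
  have hindS : ∀ i, IndependentModConst (p i) fun ξ : ↥(J i ∩ S) => h ξ := fun i =>
    (hind i).comp (e := Set.inclusion inter_subset_left) (Set.inclusion_injective _)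
  have hf : ∀ k, IndependentModConst (p (idx k)) (f k) := fun
    | .inl i => hindS i
    | .inr b => independentModConst_of_injective (ι := PUnit) (hsel _).1.le_cofinite fun _ => hr
  obtain ⟨x, hxd, hx⟩ := exists_charHom_ne_zero_forall_tendsto (fun k => hsel (idx k))
    (fun k l hkl => hinc (hidx.ne hkl)) hf t hd
  refine ⟨x, hxd, fun i ξ hξ => ?_, fun ⟨l, hl⟩ => hxd ?_⟩
  · have hlim : Tendsto (fun k => charHom x (h ξ k)) (p i)
        (nhds (charHom x (Finsupp.single ξ 1))) :=
      hx (Sum.inl ⟨i, ξ, hξ⟩) ⟨ξ, hξ⟩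
    rwa [charHom_single, one_zsmul] at hlim
  · have hlim : ∀ b, l = charHom x (bif b then d else 0) := fun b =>
      tendsto_nhds_unique (hl.mono_left (hsel _).1.le_atTop) (hx (Sum.inr b) PUnit.unit)
    exact (hlim true).symm.trans ((hlim false).trans (map_zero _))

end Extension

theorem isTower_singleton {A : Set ℕ} (hA : A.Infinite) : IsTower [A] :=
  ⟨List.forall_mem_singleton.2 hA, fun _ h => absurd h (by simp)⟩

theorem uncountable_infinite_sets : Uncountable {A : Set ℕ // A.Infinite} := by
  rw [← not_countable_iff]
  intro hcount
  have hset : Uncountable (Set ℕ) :=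
    Cardinal.aleph0_lt_mk_iff.1 (by simpa only [mk_set, mk_nat] using cantor ℵ₀)
  have hinf : {A : Set ℕ | A.Infinite}.Countable := Set.countable_coe_iff.1 hcount
  have hfin : {A : Set ℕ | A.Finite}.Countable := Set.Countable.ofPred_finite
  exact not_countable_univ ((hfin.union hinf).mono fun A _ => em A.Finite)

theorem uncountable_tower_prod : Uncountable {i : List (Set ℕ) × ℕ // IsTower i.1} :=
  have := uncountable_infinite_sets
  Function.Injective.uncountable
    (f := fun A : {A : Set ℕ // A.Infinite} =>
      (⟨([A.1], 0), isTower_singleton A.2⟩ : {i : List (Set ℕ) × ℕ // IsTower i.1}))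
    fun _ _ h => Subtype.ext (List.singleton_injective (congrArg (fun i => i.1.1) h))

theorem statement15_general {C ι : Type*} [LinearOrder C] [WellFoundedLT C] [Uncountable ι]
    {p : ι → Ultrafilter ℕ} (hsel : ∀ i, IsSelective (p i))
    (hinc : Pairwise fun i j => RKIncomp (p i) (p j)) {h : C → ℕ → C →₀ ℤ} {J : ι → Set C}
    (hJ : Pairwise (Function.onFun Disjoint J))
    (hsupp : ∀ i, ∀ ξ ∈ J i, ∀ k, ∀ α ∈ (h ξ k).support, α < ξ)
    (hind : ∀ i, IndependentModConst (p i) fun ξ : J i => h ξ)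
    {d : C →₀ ℤ} (hd : d ≠ 0) {r : ℕ → C →₀ ℤ} (hr : Function.Injective r) :
    ∃ φ : (C →₀ ℤ) →+ UnitAddCircle, φ d ≠ 0 ∧
      (∀ i, ∀ ξ ∈ J i, Tendsto (fun k => φ (h ξ k)) (p i) (nhds (φ (Finsupp.single ξ 1)))) ∧
      ¬ ∃ l, Tendsto (fun n => φ (r n)) atTop (nhds l) := by
  obtain ⟨S, hS, hS₀, hSh⟩ := exists_countable_superset_forall_subset
    (N := fun ξ => ⋃ k, ((h ξ k).support : Set C))
    (fun ξ => countable_iUnion fun k => Finset.countable_toSet _)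
    ((Finset.countable_toSet d.support).union
      (countable_iUnion fun n => Finset.countable_toSet (r n).support))
  obtain ⟨hdS, hrS⟩ := union_subset_iff.1 hS₀
  obtain ⟨x, hxd, hx, hxr⟩ := exists_charHom_forall_tendsto_of_countable hsel hinc hJ hind hS hd hr
  obtain ⟨own, hown⟩ := exists_option_eq_some_iff_mem hJ
  obtain ⟨y, hyx, hy⟩ := exists_eqOn_forall_tendsto_charHom h S x fun ξ => (own ξ).elim (pure 0) p
  have hcongr : ∀ g : C →₀ ℤ, (g.support : Set C) ⊆ S → charHom y g = charHom x g := fun g hg =>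
    charHom_congr fun c hc => hyx (hg hc)
  refine ⟨charHom y, by rwa [hcongr d hdS], fun i ξ hξ => ?_, ?_⟩
  · rw [charHom_single, one_zsmul]
    by_cases hξS : ξ ∈ S
    · simpa only [hcongr _ (iUnion_subset_iff.1 (hSh ξ hξS) _), hyx hξS] using hx i ξ ⟨hξ, hξS⟩
    · simpa only [(hown i ξ).2 hξ, Option.elim_some] using hy ξ hξS (hsupp i ξ hξ)
  · simpa only [hcongr _ (iUnion_subset_iff.1 hrS _)] using hxr

theorem statement15 (κ : Cardinal) (hκ : ℵ₀ ≤ κ) (hpow : κ ^ ℵ₀ = κ)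
    (p : List (Set ℕ) → ℕ → Ultrafilter ℕ)
    (hsel : ∀ T, IsTower T → ∀ n, IsSelective (p T n))
    (hinc : ∀ T T', IsTower T → IsTower T' → ∀ n n' : ℕ, (T, n) ≠ (T', n') →
      RKIncomp (p T n) (p T' n'))
    (hlast : ∀ T, IsTower T → ∀ n, lastOf T ∈ p T n)
    (h : Idx κ → (ℕ → GZ κ))
    (henum : ∀ g : ℕ → GZ κ, ∃ ξ : Idx κ, Ordinal.omega0 ≤ (ξ : Ordinal) ∧ h ξ = g)
    (hsupp : ∀ ξ : Idx κ, Ordinal.omega0 ≤ (ξ : Ordinal) → ∀ n : ℕ,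
      ∀ α ∈ (h ξ n).support, (α : Ordinal) < (ξ : Ordinal))
    (J : List (Set ℕ) → ℕ → Set (Idx κ))
    (hJω : ∀ T, IsTower T → ∀ n : ℕ, ∀ ξ ∈ J T n, Ordinal.omega0 ≤ (ξ : Ordinal))
    (hJdisj : ∀ T T', IsTower T → IsTower T' → ∀ n n' : ℕ, (T, n) ≠ (T', n') →
      Disjoint (J T n) (J T' n'))
    (hJne : {Tn : List (Set ℕ) × ℕ | IsTower Tn.1 ∧ (J Tn.1 Tn.2).Nonempty}.Infinite)
    (hJdist : ∀ T, IsTower T → ∀ n : ℕ, ∀ ξ ∈ J T n, ∀ ζ ∈ J T n, ξ ≠ ζ →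
      cls κ (p T n) (h ξ) ≠ cls κ (p T n) (h ζ))
    (hJli : ∀ T, IsTower T → ∀ n : ℕ, LinearIndependent ℚ
      (Sum.elim (fun ξ : J T n => cls κ (p T n) (h ↑ξ))
        (fun ζ : Idx κ => clsChi κ (p T n) ζ)))
    (d : GZ κ) (hd : d ≠ 0) (r : ℕ → GZ κ) (hr : Function.Injective r) :
    ∃ φ : GZ κ →+ AddCircle (1 : ℝ),
      φ d ≠ 0 ∧
      (∀ T : List (Set ℕ), IsTower T → ∀ n : ℕ, ∀ ξ ∈ J T n,
        IsPLim (p T n) (fun k => φ (h ξ k)) (φ (chi κ ξ))) ∧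
      ¬ ∃ l : AddCircle (1 : ℝ),
        Filter.Tendsto (fun n => φ (r n)) Filter.atTop (nhds l) := by
  have := uncountable_tower_prod
  obtain ⟨φ, hφd, hφlim, hφr⟩ := statement15_general
    (p := fun i : {i : List (Set ℕ) × ℕ // IsTower i.1} => p i.1.1 i.1.2)
    (fun i => hsel _ i.2 _)
    (fun i j hij => hinc _ _ i.2 j.2 _ _ (Subtype.coe_injective.ne hij))
    (fun i j hij => hJdisj _ _ i.2 j.2 _ _ (Subtype.coe_injective.ne hij))
    (fun i ξ hξ => hsupp ξ (hJω _ i.2 _ ξ hξ))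
    (fun i => independentModConst_of_linearIndependent (hJli _ i.2 _)) hd hr
  exact ⟨φ, hφd, fun T hT n => hφlim ⟨(T, n), hT⟩, hφr⟩

end
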